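/- The infinite series identity 2π/√3 = Σ_{k=0}^{∞} (1/4)^k · (1/3)_k / (7/6)_k · (9k + 7) / ((k + 1)(3k + 2)) holds, where the sum is over natural numbers k and all quantities are real numbers. -/

import Mathlib

noncomputable def risingFactorial (a : ℝ) (k : ℕ) : ℝ := ∏ i ∈ Finset.range k, (a + i)

lemma rF_succ (a : ℝ) (k : ℕ) : risingFactorial a (k+1) = risingFactorial a k * (a + k) := by
  unfold risingFactorial
  rw [Finset.prod_range_succ]

lemma rF_pos {a : ℝ} (ha : 0 < a) (k : ℕ) : 0 < risingFactorial a k := by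
  unfold risingFactorial
  exact Finset.prod_pos fun i _ => by positivity

/-- `(4/3)_{2k} = 4^k (2/3)_k (7/6)_k`. -/
lemma rF_dup (k : ℕ) : risingFactorial (4/3) (2*k) =
    4 ^ k * risingFactorial (2/3) k * risingFactorial (7/6) k := by
  induction k with
  | zero => simp [risingFactorial]
  | succ k ih =>
    rw [show 2 * (k+1) = 2*k+1+1 by ring, rF_succ, rF_succ, ih, rF_succ, rF_succ]
    push_cast
    ring

/-- The first member of the WZ pair. -/
noncomputable def wzF (n k : ℕ) : ℝ :=
  2 * risingFactorial (2/3) k * risingFactorial (1/3) (n+k) /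
    (((n:ℝ) + k + 2/3) * risingFactorial (4/3) (n+2*k))

/-- The certificate. -/
noncomputable def wzR (n k : ℕ) : ℝ :=
  ((n:ℝ)^2 + 3*n*k + 3*(k:ℝ)^2 + 2*n + 13/3*k + 14/9) / (((k:ℝ)+1) * ((n:ℝ) + 2*k + 4/3))

lemma wzF_pos (n k : ℕ) : 0 < wzF n k := by
  unfold wzF
  have h1 := rF_pos (a := 2/3) (by norm_num) k
  have h2 := rF_pos (a := 1/3) (by norm_num) (n+k)
  have h3 := rF_pos (a := 4/3) (by norm_num) (n+2*k)
  positivity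

lemma wzF_succ_k (n k : ℕ) : wzF n (k+1) = wzF n k *
    (((k:ℝ)+2/3) * ((n:ℝ)+k+1/3) * ((n:ℝ)+k+2/3) /
      (((n:ℝ)+k+5/3) * ((n:ℝ)+2*k+4/3) * ((n:ℝ)+2*k+7/3))) := by
  unfold wzF
  have h3 := rF_pos (a := 4/3) (by norm_num) (n+2*k)
  rw [show n + 2*(k+1) = n+2*k+1+1 by ring, ← add_assoc n k 1, rF_succ, rF_succ, rF_succ, rF_succ]
  push_cast
  have e1 : (n:ℝ) + (k+1) + 2/3 = n + k + 5/3 := by ring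
  have e2 : (4/3:ℝ) + (n + 2*k) = n + 2*k+4/3 := by ring
  have e3 : (4/3:ℝ) + (n + 2*k+1) = n + 2*k+7/3 := by ring
  rw [e1, e2, e3]
  have p1 : (0:ℝ) < n + k + 5/3 := by positivity
  have p2 : (0:ℝ) < n + 2*k + 4/3 := by positivity
  have p3 : (0:ℝ) < n + 2*k + 7/3 := by positivity
  have p4 : (0:ℝ) < n + k + 2/3 := by positivity
  generalize (n:ℝ) + k + 5/3 = A at *
  generalize (n:ℝ) + 2*k + 4/3 = B at *
  generalize (n:ℝ) + 2*k + 7/3 = C at *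
  generalize (n:ℝ) + k + 2/3 = D at *
  field_simp
  ring

lemma wzF_succ_n (n k : ℕ) : wzF (n+1) k = wzF n k *
    (((n:ℝ)+k+1/3) * ((n:ℝ)+k+2/3) / (((n:ℝ)+k+5/3) * ((n:ℝ)+2*k+4/3))) := by
  unfold wzF
  have h3 := rF_pos (a := 4/3) (by norm_num) (n+2*k)
  rw [show n + 1 + 2*k = n+2*k+1 by ring, show n + 1 + k = n + k + 1 by ring, rF_succ, rF_succ]
  push_cast
  have e1 : (n:ℝ) + 1 + k + 2/3 = n + k + 5/3 := by ring
  have e2 : (4/3:ℝ) + (n + 2*k) = n + 2*k+4/3 := by ring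
  rw [e1, e2]
  have p1 : (0:ℝ) < n + k + 5/3 := by positivity
  have p2 : (0:ℝ) < n + 2*k + 4/3 := by positivity
  have p4 : (0:ℝ) < n + k + 2/3 := by positivity
  generalize (n:ℝ) + k + 5/3 = A at *
  generalize (n:ℝ) + 2*k + 4/3 = B at *
  generalize (n:ℝ) + k + 2/3 = D at *
  field_simp
  ring

lemma wz_eq (n k : ℕ) : wzF n k - wzF n (k+1) =
    wzF n k * wzR n k - wzF (n+1) k * wzR (n+1) k := by
  rw [wzF_succ_k, wzF_succ_n]
  unfold wzR
  push_cast
  have e2 : (n:ℝ) + 1 + 2*k + 4/3 = n + 2*k+7/3 := by ring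
  rw [e2]
  have p1 : (n:ℝ) + k + 5/3 ≠ 0 := by positivity
  have p2 : (n:ℝ) + 2*k + 4/3 ≠ 0 := by positivity
  have p3 : (n:ℝ) + 2*k + 7/3 ≠ 0 := by positivity
  have p5 : (k:ℝ) + 1 ≠ 0 := by positivity
  rw [mul_assoc (wzF n k) (_ / _) (_ / _), ← mul_sub, ← mul_one_sub]
  congr 1
  field_simp
  ring

lemma wzF_le (n k : ℕ) : wzF n k ≤ (1/2)^k * wzF n 0 := by
  induction k with
  | zero => simp
  | succ k ih =>
    rw [wzF_succ_k, pow_succ]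
    have h : (((k:ℝ)+2/3) * ((n:ℝ)+k+1/3) * ((n:ℝ)+k+2/3) /
      (((n:ℝ)+k+5/3) * ((n:ℝ)+2*k+4/3) * ((n:ℝ)+2*k+7/3))) ≤ 1/2 := by
      rw [div_le_iff₀ (by positivity)]
      have a1 : ((k:ℝ)+2/3) ≤ 1/2 * ((n:ℝ)+2*k+4/3) := by
        have : (0:ℝ) ≤ n := by positivity
        linarith
      have a2 : (n:ℝ)+k+1/3 ≤ (n:ℝ)+k+5/3 := by linarith
      have a3 : (n:ℝ)+k+2/3 ≤ (n:ℝ)+2*k+7/3 := by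
        have : (0:ℝ) ≤ k := by positivity
        linarith
      calc _ ≤ (1/2 * ((n:ℝ)+2*k+4/3)) * ((n:ℝ)+k+5/3) * ((n:ℝ)+2*k+7/3) := by gcongr
        _ = _ := by ring
    calc _ ≤ ((1/2)^k * wzF n 0) * (1/2) := by
          have := (wzF_pos n k).le
          gcongr
          exact this.trans ih
      _ = _ := by ring

lemma wzR_nonneg (n k : ℕ) : 0 ≤ wzR n k := by unfold wzR; positivity

lemma wzR_le (n k : ℕ) : wzR n k ≤ n + 2 := by
  unfold wzR
  rw [div_le_iff₀ (by positivity)]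
  have h1 : (0:ℝ) ≤ n := by positivity
  have h2 : (0:ℝ) ≤ k := by positivity
  nlinarith [mul_nonneg h1 h2, mul_nonneg h1 h1, mul_nonneg h2 h2,
    mul_nonneg (mul_nonneg h1 h1) h2, mul_nonneg (mul_nonneg h1 h2) h2]

lemma wzF_zero (n : ℕ) : wzF n 0 = 2 / 3 / (((n:ℝ)+1/3) * ((n:ℝ)+2/3)) := by
  induction n with
  | zero => simp [wzF, risingFactorial]; norm_num
  | succ n ih =>
    rw [wzF_succ_n, ih]
    push_cast
    have p1 : (n:ℝ) + 1 + 2/3 ≠ 0 := by positivity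
    have p2 : (n:ℝ) + 1 + 1/3 ≠ 0 := by positivity
    rw [show (n:ℝ) + 0 + 5/3 = n + 1 + 2/3 by ring,
      show (n:ℝ) + 2 * 0 + 4/3 = n + 1 + 1/3 by ring, add_zero]
    field_simp

lemma term_eq (k : ℕ) : (1/4 : ℝ) ^ k * (risingFactorial (1/3) k) /
        (risingFactorial (7/6) k) * ((9 * (k:ℝ) + 7) / (((k:ℝ) + 1) * (3 * (k:ℝ) + 2))) =
    wzF 0 k * wzR 0 k := by
  unfold wzF wzR
  rw [zero_add, zero_add, rF_dup]
  have h1 := rF_pos (a := 2/3) (by norm_num) k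
  have h3 := rF_pos (a := 7/6) (by norm_num) k
  rw [one_div_pow]
  push_cast
  have p1 : (0:ℝ) + k + 2/3 = (3*k+2)/3 := by ring
  have p2 : (0:ℝ) + 2*k + 4/3 = 2*(3*k+2)/3 := by ring
  rw [p1, p2]
  field_simp
  ring

open Filter Topology

lemma partial_id (N K : ℕ) : ∑ k ∈ Finset.range K, wzF 0 k * wzR 0 k =
    ∑ n ∈ Finset.range N, wzF n 0 - ∑ n ∈ Finset.range N, wzF n K
      + ∑ k ∈ Finset.range K, wzF N k * wzR N k := by
  induction N with
  | zero => simp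
  | succ N ih =>
    have h : ∑ k ∈ Finset.range K, (wzF N k - wzF N (k+1)) =
      ∑ k ∈ Finset.range K, wzF N k * wzR N k -
      ∑ k ∈ Finset.range K, wzF (N+1) k * wzR (N+1) k := by
      rw [← Finset.sum_sub_distrib]
      exact Finset.sum_congr rfl fun k _ => wz_eq N k
    rw [Finset.sum_range_sub'] at h
    rw [Finset.sum_range_succ, Finset.sum_range_succ]
    linarith

lemma bound (N K : ℕ) : |∑ k ∈ Finset.range K, wzF 0 k * wzR 0 k -
    ∑ n ∈ Finset.range N, wzF n 0| ≤
    (1/2)^K * ∑ n ∈ Finset.range N, wzF n 0 + K * (((N:ℝ)+2) * wzF N 0) := by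
  rw [partial_id N K]
  have h1 : 0 ≤ ∑ n ∈ Finset.range N, wzF n K := Finset.sum_nonneg fun n _ => (wzF_pos n K).le
  have h2 : ∑ n ∈ Finset.range N, wzF n K ≤ (1/2)^K * ∑ n ∈ Finset.range N, wzF n 0 := by
    rw [Finset.mul_sum]
    exact Finset.sum_le_sum fun n _ => wzF_le n K
  have h3 : 0 ≤ ∑ k ∈ Finset.range K, wzF N k * wzR N k :=
    Finset.sum_nonneg fun k _ => mul_nonneg (wzF_pos N k).le (wzR_nonneg N k)
  have h4 : ∑ k ∈ Finset.range K, wzF N k * wzR N k ≤ K * (((N:ℝ)+2) * wzF N 0) := by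
    have : ∀ k ∈ Finset.range K, wzF N k * wzR N k ≤ ((N:ℝ)+2) * wzF N 0 := by
      intro k _
      rw [mul_comm]
      have hF : wzF N k ≤ wzF N 0 := (wzF_le N k).trans
        (mul_le_of_le_one_left (wzF_pos N 0).le (pow_le_one₀ (by norm_num) (by norm_num)))
      exact mul_le_mul (wzR_le N k) hF (wzF_pos N k).le (by positivity)
    simpa using Finset.sum_le_card_nsmul _ _ _ this
  rw [abs_le]
  constructor <;> linarith

lemma tail_tendsto : Tendsto (fun N : ℕ => ((N:ℝ)+2) * wzF N 0) atTop (𝓝 0) := by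
  have h : Tendsto (fun N : ℕ => 8 * (1 / ((N:ℝ)+1))) atTop (𝓝 0) := by
    have := tendsto_one_div_add_atTop_nhds_zero_nat (𝕜 := ℝ)
    simpa using this.const_mul 8
  refine squeeze_zero (fun N => mul_nonneg (by positivity) (wzF_pos N 0).le) (fun N => ?_) h
  rw [wzF_zero, mul_div_assoc', mul_one_div, div_le_div_iff₀ (by positivity) (by positivity)]
  have : (0:ℝ) ≤ N := by positivity
  nlinarith

lemma cot_val : Complex.cot (Real.pi * ((1/3 : ℝ) : ℂ)) = ((1 / Real.sqrt 3 : ℝ) : ℂ) := by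
  rw [← Complex.ofReal_mul, ← Complex.ofReal_cot, mul_one_div, Real.cot_eq_cos_div_sin,
    Real.cos_pi_div_three, Real.sin_pi_div_three]
  congr 1
  field_simp

lemma base_tendsto : Tendsto (fun N : ℕ => ∑ n ∈ Finset.range N, wzF n 0) atTop
    (𝓝 (2 * Real.pi / Real.sqrt 3)) := by
  have hx : ((1/3 : ℝ) : ℂ) ∈ Complex.integerComplement := by
    rintro ⟨m, hm⟩
    have h : (m:ℝ) = 1/3 := by exact_mod_cast hm
    have hm2 : (3 * m : ℝ) = 1 := by linarith
    have hm3 : 3 * m = 1 := by exact_mod_cast hm2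
    omega
  have h := tendsto_logDeriv_euler_cot_sub hx
  rw [cot_val] at h
  have h1 : Tendsto (fun N : ℕ => ∑ j ∈ Finset.range N,
      (1 / ((1/3:ℝ) - (j+1)) + 1 / ((1/3:ℝ) + (j+1)))) atTop
      (𝓝 (Real.pi * (1 / Real.sqrt 3) - 1 / (1/3))) := by
    rw [← Filter.tendsto_ofReal_iff]
    convert h using 2 with N
    · simp [cotTerm]
    · simp
  have h2 : Tendsto (fun N : ℕ => 1 / ((N:ℝ) + 1/3)) atTop (𝓝 0) := by
    simp_rw [one_div]
    exact tendsto_inv_atTop_zero.comp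
      (tendsto_atTop_add_const_right _ _ tendsto_natCast_atTop_atTop)
  have h3 := ((h1.add_const 3).sub h2).const_mul 2
  have e : 2 * (Real.pi * (1 / Real.sqrt 3) - 1 / (1/3) + 3 - 0) =
    2 * Real.pi / Real.sqrt 3 := by ring
  rw [e] at h3
  refine h3.congr fun N => ?_
  induction N with
  | zero => norm_num
  | succ N ih =>
    rw [Finset.sum_range_succ, Finset.sum_range_succ, ← ih, wzF_zero]
    push_cast
    have q1 : (1/3:ℝ) - (N+1) = -(N + 2/3) := by ring
    have q2 : (1/3:ℝ) + (N+1) = N + 1 + 1/3 := by ring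
    have q3 : (2/3:ℝ) / (((N:ℝ)+1/3) * (N+2/3)) = 2 * (1 / (N+1/3) - 1 / (N+2/3)) := by
      have : (N:ℝ) + 1/3 ≠ 0 := by positivity
      have : (N:ℝ) + 2/3 ≠ 0 := by positivity
      field_simp
      ring
    rw [q1, q2, q3, one_div_neg_eq_neg_one_div]
    ring

theorem stmt_9 :
    2 * Real.pi / Real.sqrt 3 =
      ∑' k : ℕ, (1/4 : ℝ) ^ k * (risingFactorial (1/3) k) /
        (risingFactorial (7/6) k) * ((9 * (k:ℝ) + 7) / (((k:ℝ) + 1) * (3 * (k:ℝ) + 2))) := by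
  simp_rw [term_eq]
  symm
  apply HasSum.tsum_eq
  rw [hasSum_iff_tendsto_nat_of_nonneg
    (fun k => mul_nonneg (wzF_pos 0 k).le (wzR_nonneg 0 k))]
  have key : ∀ K : ℕ, |∑ k ∈ Finset.range K, wzF 0 k * wzR 0 k - 2 * Real.pi / Real.sqrt 3| ≤
      (1/2)^K * (2 * Real.pi / Real.sqrt 3) := by
    intro K
    have h1 := (base_tendsto.const_sub (∑ k ∈ Finset.range K, wzF 0 k * wzR 0 k)).abs
    have h2 := (base_tendsto.const_mul ((1/2:ℝ)^K)).add (tail_tendsto.const_mul (K:ℝ))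
    rw [mul_zero, add_zero] at h2
    exact le_of_tendsto_of_tendsto' h1 h2 (fun N => bound N K)
  rw [tendsto_iff_norm_sub_tendsto_zero]
  have h0 : Tendsto (fun K : ℕ => (1/2:ℝ)^K * (2 * Real.pi / Real.sqrt 3)) atTop (𝓝 0) := by
    simpa using (tendsto_pow_atTop_nhds_zero_of_lt_one (r := (1/2:ℝ)) (by norm_num)
      (by norm_num)).mul_const (2 * Real.pi / Real.sqrt 3)
  exact squeeze_zero (fun _ => norm_nonneg _) (fun K => key K) h0
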